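/- Let k be a field, k((t)) the Laurent series field (HahnSeries ℤ k), and write t = single 1 1, so t⁻¹ = single (−1) 1. Let S be a finite subset of k and set a = Π_{s ∈ S} (t⁻¹ − C s) ∈ k((t)). Then { y ∈ k : res( a · (1 − t·C y)⁻¹ ) = 0 } = S, where res(z) = z.coeff 0 and C : k → k((t)) is the constant embedding. (Thus every finite subset of k arises as a set of the form S_{a,b}.) -/

import Mathlib

/-- The `n`-th coefficient of the geometric series `(1 - t y)⁻¹` is `y ^ n`. -/
theorem coeff_inv_one_sub_single_mul_C {k : Type*} [Field k] (y : k) (n : ℕ) :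
    ((1 - HahnSeries.single (1 : ℤ) (1 : k) * HahnSeries.C y)⁻¹).coeff (n : ℤ) = y ^ n := by
  have h : (PowerSeries.mk fun n => y ^ n) * (1 - PowerSeries.X * PowerSeries.C y) = 1 := by
    ext n
    rw [mul_sub, mul_one, ← mul_assoc, map_sub, PowerSeries.coeff_mul_C, PowerSeries.coeff_one]
    cases n with
    | zero => simp
    | succ n => simp [PowerSeries.coeff_succ_mul_X, pow_succ]
  have h' := congrArg (HahnSeries.ofPowerSeries ℤ k) h
  rw [map_mul, map_sub, map_mul, map_one, HahnSeries.ofPowerSeries_X,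
    HahnSeries.ofPowerSeries_C] at h'
  rw [← eq_inv_of_mul_eq_one_left h', HahnSeries.ofPowerSeries_apply_coeff, PowerSeries.coeff_mk]

/-- Multiplying by `t⁻¹ - s` acts on the geometric coefficients as multiplication by `y - s`. -/
theorem coeff_prod_single_sub_C_mul_inv {k : Type*} [Field k] (S : Finset k) (y : k) (n : ℕ) :
    ((∏ s ∈ S, (HahnSeries.single (-1 : ℤ) (1 : k) - HahnSeries.C s)) *
      (1 - HahnSeries.single (1 : ℤ) (1 : k) * HahnSeries.C y)⁻¹).coeff (n : ℤ) =
      y ^ n * ∏ s ∈ S, (y - s) := by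
  classical
  induction S using Finset.induction_on generalizing n with
  | empty => simpa using coeff_inv_one_sub_single_mul_C y n
  | insert s S hs ih =>
    have ih' := ih (n + 1)
    push_cast at ih'
    rw [Finset.prod_insert hs, Finset.prod_insert hs, mul_assoc, sub_mul, HahnSeries.coeff_sub,
      HahnSeries.coeff_single_mul, HahnSeries.C_mul_eq_smul, HahnSeries.coeff_smul, ih,
      sub_neg_eq_add, ih', smul_eq_mul]
    ring


/-- in k((t)) = HahnSeries ℤ k with t = single 1 1 and t⁻¹ = single (−1) 1,
    for a finite S ⊆ k and a = Π_{s ∈ S} (t⁻¹ − C s),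
    {y ∈ k : res(a/(1 − t·C y)) = 0} = S. -/
theorem stmt_12 {k : Type*} [Field k] (S : Finset k) :
    {y : k | ((∏ s ∈ S, (HahnSeries.single (-1 : ℤ) (1 : k) - HahnSeries.C s)) *
        (1 - HahnSeries.single (1 : ℤ) (1 : k) * HahnSeries.C y)⁻¹).coeff 0 = 0} = ↑S := by
  ext y
  have h := coeff_prod_single_sub_C_mul_inv S y 0
  rw [Nat.cast_zero, pow_zero, one_mul] at h
  rw [Set.mem_ofPred_eq, h, Finset.prod_eq_zero_iff, Finset.mem_coe]
  simp [sub_eq_zero]
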